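/- Let d = 2. For every integer n ≥ 2, the number of loopless chord diagrams satisfies b(n) = a(n,0) − a(n−1,0). -/

import Mathlib

/-- A generalized linear diagram on points `1,…,N` whose blocks all have size `d`:
a partition of `{1,…,N}` into blocks of size `d`. -/
def IsLinearDiagram (N d : ℕ) (P : Finset (Finset ℕ)) : Prop :=
  (∀ b ∈ P, b.card = d) ∧ (∀ b ∈ P, ∀ x ∈ b, x ∈ Finset.Icc 1 N) ∧
    ∀ x ∈ Finset.Icc 1 N, ∃! b : Finset ℕ, b ∈ P ∧ x ∈ b

/-- The number of loops of a linear diagram on points `1,…,N`: indices `i` with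
`1 ≤ i ≤ N - 1` such that `i` and `i + 1` lie in the same block. -/
noncomputable def linLoops (N : ℕ) (P : Finset (Finset ℕ)) : ℕ :=
  Set.ncard {i : ℕ | 1 ≤ i ∧ i + 1 ≤ N ∧ ∃ b ∈ P, i ∈ b ∧ i + 1 ∈ b}

/-- `numA d n k` : the number of generalized linear diagrams of order `(n,d)`
with exactly `k` loops. -/
noncomputable def numA (d n k : ℕ) : ℕ :=
  Set.ncard {P : Finset (Finset ℕ) | IsLinearDiagram (n * d) d P ∧ linLoops (n * d) P = k}

/-- `numA` with an integer loop index, zero for negative indices. -/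
noncomputable def numAZ (d n : ℕ) (k : ℤ) : ℕ :=
  if 0 ≤ k then numA d n k.toNat else 0

/-- Binomial coefficient with integer arguments: `0` when `y < 0` or `y > x`. -/
def iChoose (x y : ℤ) : ℕ :=
  if 0 ≤ y ∧ y ≤ x then x.toNat.choose y.toNat else 0

/-- A generalized chord diagram on `ZMod N` whose blocks all have size `d`:
a partition of `ZMod N` into blocks of size `d`. -/
def IsChordDiagram (N d : ℕ) (P : Finset (Finset (ZMod N))) : Prop :=
  (∀ b ∈ P, b.card = d) ∧ ∀ x : ZMod N, ∃! b : Finset (ZMod N), b ∈ P ∧ x ∈ b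

/-- A chord diagram is loopless if no residues `i`, `i+1` lie in the same block. -/
def ChordLoopless (N : ℕ) (P : Finset (Finset (ZMod N))) : Prop :=
  ∀ i : ZMod N, ∀ b ∈ P, i ∈ b → i + 1 ∈ b → False

/-- `numB d n` : the number of loopless generalized chord diagrams of order `(n,d)`. -/
noncomputable def numB (d n : ℕ) : ℕ :=
  Set.ncard {P : Finset (Finset (ZMod (n * d))) |
    IsChordDiagram (n * d) d P ∧ ChordLoopless (n * d) P}

/-- The shift `i ↦ i + v` modulo `M`, on the representatives `1,…,M`. -/
def shiftMod (M v i : ℕ) : ℕ := if i + v ≤ M then i + v else i + v - M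

/-- An `m`-symmetric linear diagram with sector size `v` and blocks of size `d`:
a partition of `{1,…,m·v}` into blocks of size `d` invariant under the shift by `v`
modulo `m·v`. -/
def IsMSymLinear (d m v : ℕ) (P : Finset (Finset ℕ)) : Prop :=
  IsLinearDiagram (m * v) d P ∧ ∀ b ∈ P, b.image (shiftMod (m * v) v) ∈ P

/-- The number of loops lying in sector `s` (sectors numbered from `0`):
indices `i` with `s·v + 1 ≤ i ≤ (s+1)·v - 1` such that `i` and `i + 1` lie
in the same block. -/
noncomputable def sectorLoops (v : ℕ) (P : Finset (Finset ℕ)) (s : ℕ) : ℕ :=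
  Set.ncard {i : ℕ | s * v + 1 ≤ i ∧ i + 1 ≤ (s + 1) * v ∧ ∃ b ∈ P, i ∈ b ∧ i + 1 ∈ b}

/-- `numAtil d m v k` : the number of `m`-symmetric linear diagrams with sector size `v`,
blocks of size `d`, and exactly `k` loops in each sector (`ã(v,k;m,d)`). -/
noncomputable def numAtil (d m v k : ℕ) : ℕ :=
  Set.ncard {P : Finset (Finset ℕ) |
    IsMSymLinear d m v P ∧ ∀ s < m, sectorLoops v P s = k}

namespace ChordAux

def IsPart {α : Type*} [DecidableEq α] (S : Set α) (P : Finset (Finset α)) : Prop :=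
  (∀ b ∈ P, b.card = 2) ∧ (∀ b ∈ P, ∀ x ∈ b, x ∈ S) ∧
    ∀ x ∈ S, ∃! b : Finset α, b ∈ P ∧ x ∈ b

def im {α β : Type*} [DecidableEq β] (f : α → β) (P : Finset (Finset α)) : Finset (Finset β) :=
  P.image (fun b => b.image f)

theorem mem_im {α β : Type*} [DecidableEq β] (f : α → β) (P : Finset (Finset α)) (c : Finset β) :
    c ∈ im f P ↔ ∃ b ∈ P, b.image f = c := by
  simp [im]

theorem im_im {α β : Type*} [DecidableEq α] [DecidableEq β] (f : α → β) (g : β → α)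
    (P : Finset (Finset α)) (h : ∀ b ∈ P, ∀ x ∈ b, g (f x) = x) : im g (im f P) = P := by
  have key : ∀ b ∈ P, (b.image f).image g = b := by
    intro b hb
    rw [Finset.image_image]
    conv_rhs => rw [← Finset.image_id (s := b)]
    apply Finset.image_congr
    intro x hx
    exact h b hb x hx
  ext c
  simp only [mem_im]
  constructor
  · rintro ⟨_, ⟨b, hb, rfl⟩, rfl⟩
    rw [key b hb]; exact hb
  · intro hc
    exact ⟨_, ⟨c, hc, rfl⟩, key c hc⟩

theorem IsPart.im {α β : Type*} [DecidableEq α] [DecidableEq β] {S : Set α} {T : Set β}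
    {P : Finset (Finset α)} (hP : IsPart S P) (f : α → β) (g : β → α)
    (hf : ∀ x ∈ S, f x ∈ T) (hg : ∀ y ∈ T, g y ∈ S)
    (hgf : ∀ x ∈ S, g (f x) = x) (hfg : ∀ y ∈ T, f (g y) = y) : IsPart T (im f P) := by
  obtain ⟨h1, h2, h3⟩ := hP
  refine ⟨?_, ?_, ?_⟩
  · intro c hc
    obtain ⟨b, hb, rfl⟩ := (mem_im _ _ _).1 hc
    rw [Finset.card_image_of_injOn, h1 b hb]
    intro x hx y hy hxy
    rw [← hgf x (h2 b hb x hx), ← hgf y (h2 b hb y hy), hxy]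
  · intro c hc y hy
    obtain ⟨b, hb, rfl⟩ := (mem_im _ _ _).1 hc
    obtain ⟨x, hx, rfl⟩ := Finset.mem_image.1 hy
    exact hf x (h2 b hb x hx)
  · intro y hy
    obtain ⟨b, ⟨hb, hyb⟩, hu⟩ := h3 (g y) (hg y hy)
    refine ⟨b.image f, ⟨(mem_im _ _ _).2 ⟨b, hb, rfl⟩, Finset.mem_image.2 ⟨_, hyb, hfg y hy⟩⟩, ?_⟩
    rintro c ⟨hc, hyc⟩
    obtain ⟨b', hb', rfl⟩ := (mem_im _ _ _).1 hc
    obtain ⟨x, hx, rfl⟩ := Finset.mem_image.1 hyc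
    rw [hgf x (h2 b' hb' x hx)] at hu
    rw [hu b' ⟨hb', hx⟩]

def LF (N : ℕ) (P : Finset (Finset ℕ)) : Prop :=
  ∀ i : ℕ, 1 ≤ i → i + 1 ≤ N → ∀ b ∈ P, i ∈ b → i + 1 ∈ b → False

theorem linLoops_zero (N : ℕ) (P : Finset (Finset ℕ)) : linLoops N P = 0 ↔ LF N P := by
  have hfin : Set.Finite {i : ℕ | 1 ≤ i ∧ i + 1 ≤ N ∧ ∃ b ∈ P, i ∈ b ∧ i + 1 ∈ b} :=
    (Set.finite_Iic N).subset (fun i hi => by have := hi.2.1; simp only [Set.mem_Iic]; omega)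
  unfold linLoops LF
  rw [Set.ncard_eq_zero hfin, Set.eq_empty_iff_forall_notMem]
  constructor
  · intro h i h1 h2 b hb hi hi'
    exact h i ⟨h1, h2, b, hb, hi, hi'⟩
  · rintro h i ⟨h1, h2, b, hb, hi, hi'⟩
    exact h i h1 h2 b hb hi hi'

theorem lin_iff (N : ℕ) (P : Finset (Finset ℕ)) :
    IsLinearDiagram N 2 P ↔ IsPart (Set.Icc 1 N) P := by
  simp [IsLinearDiagram, IsPart]

theorem chord_iff (N : ℕ) (P : Finset (Finset (ZMod N))) :
    IsChordDiagram N 2 P ↔ IsPart Set.univ P := by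
  simp [IsChordDiagram, IsPart]

theorem numA_eq (n : ℕ) :
    numA 2 n 0 = Set.ncard {P : Finset (Finset ℕ) | IsPart (Set.Icc 1 (n * 2)) P ∧ LF (n * 2) P} := by
  simp only [numA, linLoops_zero, lin_iff]

theorem finite_lin (N : ℕ) : Set.Finite {P : Finset (Finset ℕ) | IsPart (Set.Icc 1 N) P ∧ LF N P} := by
  apply ((Finset.Icc 1 N).powerset.powerset.finite_toSet).subset
  rintro P ⟨⟨-, h, -⟩, -⟩
  simp only [Finset.mem_coe, Finset.mem_powerset]
  intro b hb
  rw [Finset.mem_powerset]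
  intro x hx
  simpa using h b hb x hx

theorem pair_eq {α : Type*} [DecidableEq α] {b : Finset α} (hb : b.card = 2) {x y : α} (hx : x ∈ b) (hy : y ∈ b)
    (hxy : x ≠ y) : b = {x, y} := by
  symm
  apply Finset.eq_of_subset_of_card_le
  · intro z hz
    simp only [Finset.mem_insert, Finset.mem_singleton] at hz
    rcases hz with rfl | rfl <;> assumption
  · rw [hb, Finset.card_pair hxy]

/-- chord part -/
theorem chord_count (N : ℕ) (hN : 3 ≤ N) :
    Set.ncard {P : Finset (Finset (ZMod N)) | IsPart Set.univ P ∧ ChordLoopless N P} =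
    Set.ncard {P : Finset (Finset ℕ) | (IsPart (Set.Icc 1 N) P ∧ LF N P) ∧ ({1, N} : Finset ℕ) ∉ P} := by
  haveI : NeZero N := ⟨by omega⟩
  let f : ZMod N → ℕ := fun x => x.val + 1
  let g : ℕ → ZMod N := fun x => ((x - 1 : ℕ) : ZMod N)
  have hf : ∀ x ∈ (Set.univ : Set (ZMod N)), f x ∈ Set.Icc 1 N := by
    intro x _
    have := x.val_lt
    simp only [f, Set.mem_Icc]; omega
  have hgf : ∀ x ∈ (Set.univ : Set (ZMod N)), g (f x) = x := by
    intro x _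
    simp [f, g]
  have hfg : ∀ y ∈ Set.Icc 1 N, f (g y) = y := by
    rintro y ⟨h1, h2⟩
    simp only [f, g]
    rw [ZMod.val_natCast_of_lt (by omega)]; omega
  have hg : ∀ y ∈ Set.Icc 1 N, g y ∈ (Set.univ : Set (ZMod N)) := fun _ _ => trivial
  refine Set.ncard_congr (fun P _ => im f P) ?_ ?_ ?_
  · rintro P ⟨hP, hl⟩
    refine ⟨⟨hP.im f g hf hg hgf hfg, ?_⟩, ?_⟩
    · intro i h1 h2 c hc hi hi'
      obtain ⟨b, hb, rfl⟩ := (mem_im _ _ _).1 hc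
      obtain ⟨x, hx, rfl⟩ := Finset.mem_image.1 hi
      obtain ⟨y, hy, hxy⟩ := Finset.mem_image.1 hi'
      refine hl x b hb hx ?_
      have : y = x + 1 := by
        rw [← ZMod.natCast_zmod_val y, ← ZMod.natCast_zmod_val x]
        have : y.val = x.val + 1 := by simp only [f] at hxy; omega
        rw [this]; push_cast; rfl
      rwa [← this]
    · intro hc
      obtain ⟨b, hb, hbe⟩ := (mem_im _ _ _).1 hc
      obtain ⟨x, hx, hx1⟩ := Finset.mem_image.1 (show 1 ∈ b.image f by rw [hbe]; simp)
      obtain ⟨y, hy, hy1⟩ := Finset.mem_image.1 (show N ∈ b.image f by rw [hbe]; simp)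
      refine hl y b hb hy ?_
      have : y + 1 = x := by
        rw [← ZMod.natCast_zmod_val y, ← ZMod.natCast_zmod_val x]
        have h0 : x.val = 0 := by simp only [f] at hx1; omega
        have h2 : y.val + 1 = N := hy1
        rw [h0]
        have h3 : ((y.val + 1 : ℕ) : ZMod N) = 0 := by rw [h2]; simp
        push_cast at h3 ⊢
        exact h3
      rwa [this]
  · intro P Q _ _ h
    have h' : im f P = im f Q := h
    rw [← im_im f g P (fun _ _ x _ => hgf x trivial), h', im_im f g Q (fun _ _ x _ => hgf x trivial)]
  · rintro Q ⟨⟨hQ, hl⟩, hn⟩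
    refine ⟨im g Q, ⟨hQ.im g f hg hf hfg hgf, ?_⟩, ?_⟩
    · intro i c hc hi hi'
      obtain ⟨b, hb, rfl⟩ := (mem_im _ _ _).1 hc
      obtain ⟨x, hx, rfl⟩ := Finset.mem_image.1 hi
      obtain ⟨y, hy, hxy⟩ := Finset.mem_image.1 hi'
      obtain ⟨hx1, hx2⟩ := hQ.2.1 b hb x hx
      have hyI := hQ.2.1 b hb y hy
      have hyf := hfg y hyI
      obtain ⟨hy1, hy2⟩ := hyI
      by_cases hxN : x = N
      · have hy' : y = 1 := by
          rw [← hyf, hxy]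
          simp only [f, g]
          have : ((x - 1 : ℕ) : ZMod N) + 1 = ((x - 1 + 1 : ℕ) : ZMod N) := by push_cast; rfl
          rw [this, Nat.sub_add_cancel hx1, hxN]; simp
        subst hy'
        subst hxN
        exact hn (pair_eq (hQ.1 b hb) hy hx (by omega) ▸ hb)
      · have hy' : y = x + 1 := by
          rw [← hyf, hxy]
          simp only [f, g]
          have : ((x - 1 : ℕ) : ZMod N) + 1 = ((x - 1 + 1 : ℕ) : ZMod N) := by push_cast; rfl
          rw [this, Nat.sub_add_cancel hx1, ZMod.val_natCast_of_lt (by omega)]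
        subst hy'
        exact hl x hx1 hy2 b hb hx hy
    · exact im_im g f Q (fun b hb x hx => hfg x (hQ.2.1 b hb x hx))

theorem lin_count (M : ℕ) (hM : 1 ≤ M) :
    Set.ncard {P : Finset (Finset ℕ) | IsPart (Set.Icc 1 M) P ∧ LF M P} =
    Set.ncard {P : Finset (Finset ℕ) |
      (IsPart (Set.Icc 1 (M + 2)) P ∧ LF (M + 2) P) ∧ ({1, M + 2} : Finset ℕ) ∈ P} := by
  let e : Finset ℕ := {1, M + 2}
  let f : ℕ → ℕ := fun x => x + 1
  let g : ℕ → ℕ := fun x => x - 1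
  have hf : ∀ x ∈ Set.Icc 1 M, f x ∈ Set.Icc 2 (M + 1) := by
    rintro x ⟨h1, h2⟩; simp only [f, Set.mem_Icc]; omega
  have hg : ∀ x ∈ Set.Icc 2 (M + 1), g x ∈ Set.Icc 1 M := by
    rintro x ⟨h1, h2⟩; simp only [g, Set.mem_Icc]; omega
  have hgf : ∀ x ∈ Set.Icc 1 M, g (f x) = x := by
    rintro x ⟨h1, h2⟩; simp only [f, g]; omega
  have hfg : ∀ x ∈ Set.Icc 2 (M + 1), f (g x) = x := by
    rintro x ⟨h1, h2⟩; simp only [f, g]; omega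
  have heP : ∀ R : Finset (Finset ℕ), IsPart (Set.Icc 2 (M + 1)) R → e ∉ R := by
    intro R hR he
    have := (hR.2.1 e he 1 (by simp [e])).1
    omega
  refine Set.ncard_congr (fun P _ => insert e (im f P)) ?_ ?_ ?_
  · rintro P ⟨hP, hl⟩
    have hR := hP.im f g hf hg hgf hfg
    have hRl : ∀ i : ℕ, ∀ b ∈ im f P, i ∈ b → i + 1 ∈ b → False := by
      intro i c hc hi hi'
      have k1 := hR.2.1 c hc _ hi
      have k2 := hR.2.1 c hc _ hi'
      obtain ⟨b, hb, rfl⟩ := (mem_im _ _ _).1 hc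
      obtain ⟨x, hx, rfl⟩ := Finset.mem_image.1 hi
      obtain ⟨y, hy, hxy⟩ := Finset.mem_image.1 hi'
      have : y = x + 1 := by simp only [f] at hxy; omega
      subst this
      exact hl x (hP.2.1 b hb x hx).1 (hP.2.1 b hb _ hy).2 b hb hx hy
    generalize im f P = R at hR hRl
    refine ⟨⟨⟨?_, ?_, ?_⟩, ?_⟩, Finset.mem_insert_self _ _⟩
    · intro b hb
      rcases Finset.mem_insert.1 hb with rfl | hb
      · exact Finset.card_pair (by omega)
      · exact hR.1 b hb
    · intro b hb x hx
      rcases Finset.mem_insert.1 hb with rfl | hb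
      · simp only [e, Finset.mem_insert, Finset.mem_singleton] at hx
        simp only [Set.mem_Icc]; omega
      · have := hR.2.1 b hb x hx
        simp only [Set.mem_Icc] at this ⊢; omega
    · rintro x ⟨hx1, hx2⟩
      by_cases hx : x = 1 ∨ x = M + 2
      · refine ⟨e, ⟨Finset.mem_insert_self _ _, by simpa [e] using hx⟩, ?_⟩
        rintro b ⟨hb, hxb⟩
        rcases Finset.mem_insert.1 hb with rfl | hb
        · rfl
        · have := hR.2.1 b hb x hxb
          simp only [Set.mem_Icc] at this; omega
      · obtain ⟨b, ⟨hb, hxb⟩, hu⟩ := hR.2.2 x (by simp only [Set.mem_Icc]; omega)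
        refine ⟨b, ⟨Finset.mem_insert_of_mem hb, hxb⟩, ?_⟩
        rintro c ⟨hc, hxc⟩
        rcases Finset.mem_insert.1 hc with rfl | hc
        · exact absurd (by simpa [e] using hxc) hx
        · exact hu c ⟨hc, hxc⟩
    · intro i h1 h2 b hb hi hi'
      rcases Finset.mem_insert.1 hb with rfl | hb
      · simp only [e, Finset.mem_insert, Finset.mem_singleton] at hi hi'
        omega
      · exact hRl i b hb hi hi'
  · rintro P Q ⟨hP, -⟩ ⟨hQ, -⟩ h
    have h' : insert e (im f P) = insert e (im f Q) := h
    have h2 : im f P = im f Q := by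
      rw [← Finset.erase_insert (heP _ (hP.im f g hf hg hgf hfg)), h',
        Finset.erase_insert (heP _ (hQ.im f g hf hg hgf hfg))]
    rw [← im_im f g P (fun b hb x hx => hgf x (hP.2.1 b hb x hx)), h2,
      im_im f g Q (fun b hb x hx => hgf x (hQ.2.1 b hb x hx))]
  · rintro Q ⟨⟨hQ, hl⟩, he⟩
    change e ∈ Q at he
    have hI : ∀ b ∈ Q.erase e, ∀ x ∈ b, x ∈ Set.Icc 2 (M + 1) := by
      intro b hb x hx
      obtain ⟨hne, hbQ⟩ := Finset.mem_erase.1 hb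
      have hxI := hQ.2.1 b hbQ x hx
      have : x ∉ e := by
        intro hxe
        exact hne ((hQ.2.2 x hxI).unique ⟨hbQ, hx⟩ ⟨he, hxe⟩)
      simp only [e, Finset.mem_insert, Finset.mem_singleton] at this
      simp only [Set.mem_Icc] at hxI ⊢; omega
    have hR : IsPart (Set.Icc 2 (M + 1)) (Q.erase e) := by
      refine ⟨fun b hb => hQ.1 b (Finset.mem_of_mem_erase hb), hI, ?_⟩
      rintro x ⟨hx1, hx2⟩
      obtain ⟨b, ⟨hb, hxb⟩, hu⟩ := hQ.2.2 x ⟨by omega, by omega⟩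
      refine ⟨b, ⟨Finset.mem_erase.2 ⟨?_, hb⟩, hxb⟩, ?_⟩
      · rintro rfl
        simp only [e, Finset.mem_insert, Finset.mem_singleton] at hxb
        omega
      · rintro c ⟨hc, hxc⟩
        exact hu c ⟨Finset.mem_of_mem_erase hc, hxc⟩
    refine ⟨im g (Q.erase e), ⟨hR.im g f hg hf hfg hgf, ?_⟩, ?_⟩
    · intro i h1 h2 c hc hi hi'
      obtain ⟨b, hb, rfl⟩ := (mem_im _ _ _).1 hc
      obtain ⟨x, hx, rfl⟩ := Finset.mem_image.1 hi
      obtain ⟨y, hy, hxy⟩ := Finset.mem_image.1 hi'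
      obtain ⟨hx1, hx2⟩ := hI b hb x hx
      obtain ⟨hy1, hy2⟩ := hI b hb y hy
      have : y = x + 1 := by simp only [g] at hxy; omega
      subst this
      exact hl x (by omega) (by omega) b (Finset.mem_of_mem_erase hb) hx hy
    · change insert e (im f (im g (Q.erase e))) = Q
      rw [im_im g f _ (fun b hb x hx => hfg x (hI b hb x hx)), Finset.insert_erase he]

end ChordAux

open ChordAux in
/-- for `d = 2` and `n ≥ 2`, `b(n) = a(n,0) − a(n−1,0)`. -/
theorem chord_eq_linear_sub_two (n : ℕ) (hn : 2 ≤ n) :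
    (numB 2 n : ℤ) = (numA 2 n 0 : ℤ) - (numA 2 (n - 1) 0 : ℤ) := by
  have hB := chord_count (n * 2) (by omega)
  simp only [← chord_iff] at hB
  change numB 2 n = _ at hB
  have hA := numA_eq (n - 1)
  rw [lin_count _ (by omega), show (n - 1) * 2 + 2 = n * 2 by omega] at hA
  have key := Set.ncard_inter_add_ncard_diff_eq_ncard
    {P : Finset (Finset ℕ) | IsPart (Set.Icc 1 (n * 2)) P ∧ LF (n * 2) P}
    {P : Finset (Finset ℕ) | ({1, n * 2} : Finset ℕ) ∈ P} (finite_lin _)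
  rw [← numA_eq] at key
  have e1 : {P : Finset (Finset ℕ) | IsPart (Set.Icc 1 (n * 2)) P ∧ LF (n * 2) P} ∩
    {P : Finset (Finset ℕ) | ({1, n * 2} : Finset ℕ) ∈ P} = {P : Finset (Finset ℕ) |
      (IsPart (Set.Icc 1 (n * 2)) P ∧ LF (n * 2) P) ∧ ({1, n * 2} : Finset ℕ) ∈ P} := rfl
  have e2 : {P : Finset (Finset ℕ) | IsPart (Set.Icc 1 (n * 2)) P ∧ LF (n * 2) P} \
    {P : Finset (Finset ℕ) | ({1, n * 2} : Finset ℕ) ∈ P} = {P : Finset (Finset ℕ) |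
      (IsPart (Set.Icc 1 (n * 2)) P ∧ LF (n * 2) P) ∧ ({1, n * 2} : Finset ℕ) ∉ P} := rfl
  rw [e1, e2, ← hA, ← hB] at key
  omega
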